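/- Let X be a finite m-almost quasigroup quandle with m ≤ 3. Then for every n ≥ 1, the torsion subgroup of the rack homology group H_n^R(X) is annihilated by N = m·lcm(|X|, |X|−m). -/

import Mathlib

/-- The `n`-th rack chain group: the free abelian group on `n`-tuples of `X`. -/
abbrev RackChain (X : Type) (n : ℕ) : Type := FreeAbelianGroup (Fin n → X)

/-- The face map `d_i^{(*_0)}` deleting the `i`-th entry (0-indexed). -/
def dZero {X : Type} (n : ℕ) (i : Fin (n + 1)) (x : Fin (n + 1) → X) :
    Fin n → X :=
  fun j => if (j : ℕ) < (i : ℕ) then x j.castSucc else x j.succ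

/-- The face map `d_i^{(*)}`: entries before position `i` are acted on by `x i`
and the `i`-th entry is deleted (0-indexed). -/
def dStar {X : Type} (op : X → X → X) (n : ℕ) (i : Fin (n + 1))
    (x : Fin (n + 1) → X) : Fin n → X :=
  fun j => if (j : ℕ) < (i : ℕ) then op (x j.castSucc) (x i) else x j.succ

/-- The rack boundary `∂_{n+1} : C_{n+1}^R(X) → C_n^R(X)`,
`∂(x) = Σ_{i=1}^{n+1} (-1)^i (d_i^{(*_0)} x - d_i^{(*)} x)` (with `i` 1-based). -/
def rackBoundary {X : Type} (op : X → X → X) (n : ℕ) :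
    RackChain X (n + 1) →+ RackChain X n :=
  FreeAbelianGroup.lift fun x =>
    ∑ i : Fin (n + 1), ((-1 : ℤ) ^ ((i : ℕ) + 1)) •
      (FreeAbelianGroup.of (dZero n i x) - FreeAbelianGroup.of (dStar op n i x))

/-- The group of rack `(n+1)`-cycles. -/
def rackCycles {X : Type} (op : X → X → X) (n : ℕ) :
    AddSubgroup (RackChain X (n + 1)) :=
  (rackBoundary op n).ker

/-- The group of rack `(n+1)`-boundaries, viewed inside the cycles. -/
def rackBoundaries {X : Type} (op : X → X → X) (n : ℕ) :
    AddSubgroup (rackCycles op n) :=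
  ((rackBoundary op (n + 1)).range).addSubgroupOf (rackCycles op n)

/-- The `(n+1)`-st rack homology group `H_{n+1}^R(X)` (so `n = 0` gives `H_1`). -/
def rackHomology {X : Type} (op : X → X → X) (n : ℕ) : Type :=
  rackCycles (X := X) op n ⧸ rackBoundaries op n

instance {X : Type} (op : X → X → X) (n : ℕ) :
    AddCommGroup (rackHomology op n) :=
  QuotientAddGroup.Quotient.addCommGroup _

section combinatorics

variable {X : Type} [Fintype X] [DecidableEq X] (op : X → X → X) (m : ℕ)

/-- Left translation by `a` preserves the complement of the stabilizer. -/
theorem aux_compl (hidem : ∀ a : X, op a a = a)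
    (hsol : ∀ a b : X, op a b ≠ a → ∃! x : X, op a x = b) (a x : X) (hx : op a x ≠ a) :
    op a (op a x) ≠ a := by
  classical
  set S := Finset.univ.filter fun x => op a x = a with hS
  set U := Finset.univ.filter fun x => op a (op a x) = a with hU
  have haS : ∀ y ∈ S, op a y = a := fun y hy => by simpa [hS] using hy
  have h1 : (Uᶜ).card = (Sᶜ).card := by
    apply Finset.card_bij (fun y _ => op a y)
    · intro y hy
      simpa [hU, hS] using hy
    · intro y hy y' hy' h
      have hy2 : op a (op a y) ≠ a := by simpa [hU] using hy
      exact (hsol a _ hy2).unique rfl h.symm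
    · intro b hb
      have hb2 : op a b ≠ a := by simpa [hS] using hb
      obtain ⟨y, hy, _⟩ := hsol a b hb2
      exact ⟨y, by simp [hU, hy, hb2], hy⟩
  have h2 : U.card = S.card := by
    have e1 := Finset.card_add_card_compl U
    have e2 := Finset.card_add_card_compl S
    omega
  have h3 : S ⊆ U := by
    intro y hy
    have := haS y hy
    simp [hU, this, hidem]
  have h4 : S = U := Finset.eq_of_subset_of_card_le h3 h2.le
  intro h
  have : x ∈ U := by simp [hU, h]
  rw [← h4] at this
  exact hx (haS x this)

/-- Off the stabilizer, left translation is injective. -/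
theorem aux_inj (hidem : ∀ a : X, op a a = a)
    (hsol : ∀ a b : X, op a b ≠ a → ∃! x : X, op a x = b) (a x y : X) (hx : op a x ≠ a)
    (h : op a x = op a y) : x = y :=
  (hsol a _ (aux_compl op hidem hsol a x hx)).unique rfl h.symm

/-- Sums over a left translate. -/
theorem aux_sum {M : Type*} [AddCommGroup M] (hidem : ∀ a : X, op a a = a)
    (hstab : ∀ a : X, (Finset.univ.filter fun x => op a x = a).card = m)
    (hsol : ∀ a b : X, op a b ≠ a → ∃! x : X, op a x = b) (f : X → M) (a : X) :
    ∑ y, f (op a y) = (m : ℤ) • f a + ∑ y, f y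
      - ∑ y ∈ Finset.univ.filter (fun x => op a x = a), f y := by
  rw [← Finset.sum_filter_add_sum_filter_not Finset.univ (fun x => op a x = a)
    (fun y => f (op a y))]
  rw [← Finset.sum_filter_add_sum_filter_not Finset.univ (fun x => op a x = a) f]
  have e1 : ∑ y ∈ Finset.univ.filter (fun x => op a x = a), f (op a y) = (m : ℤ) • f a := by
    rw [Finset.sum_congr rfl (g := fun _ => f a), Finset.sum_const, hstab]
    · simp
    · intro y hy
      rw [(Finset.mem_filter.1 hy).2]
  have e2 : ∑ y ∈ Finset.univ.filter (fun x => ¬ op a x = a), f (op a y)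
      = ∑ y ∈ Finset.univ.filter (fun x => ¬ op a x = a), f y := by
    apply Finset.sum_bij (fun y _ => op a y)
    · intro y hy
      simp only [Finset.mem_filter, Finset.mem_univ, true_and] at hy ⊢
      exact aux_compl op hidem hsol a y hy
    · intro y hy y' _ h
      simp only [Finset.mem_filter, Finset.mem_univ, true_and] at hy
      exact aux_inj op hidem hsol a y y' hy h
    · intro b hb
      simp only [Finset.mem_filter, Finset.mem_univ, true_and] at hb
      obtain ⟨y, hy, _⟩ := hsol a b hb
      refine ⟨y, ?_, hy⟩
      simp only [Finset.mem_filter, Finset.mem_univ, true_and]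
      intro h
      rw [h] at hy
      rw [← hy] at hb
      exact hb (hidem a)
    · intros; rfl
  rw [e1, e2]
  abel

/-- Number of fixed points of right translation by `b`. -/
theorem aux_indeg
    (hidem : ∀ a : X, op a a = a)
    (hbij : ∀ b : X, Function.Bijective fun x => op x b)
    (hdist : ∀ a b c : X, op (op a b) c = op (op a c) (op b c))
    (hstab : ∀ a : X, (Finset.univ.filter fun x => op a x = a).card = m)
    (hsol : ∀ a b : X, op a b ≠ a → ∃! x : X, op a x = b)
    (hm3 : m ≤ 3) (hlt : m < Fintype.card X) (b : X) :
    (Finset.univ.filter fun x => op x b = x).card = m := by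
  classical
  set d : X → ℕ := fun b => (Finset.univ.filter fun x => op x b = x).card with hd
  have hinv : ∀ a c, d (op a c) = d a := by
    intro a c
    symm
    apply Finset.card_bij (fun x _ => op x c)
    · intro x hx
      simp only [Finset.mem_filter, Finset.mem_univ, true_and] at hx ⊢
      rw [← hdist, hx]
    · intro x _ y _ h
      exact (hbij c).1 h
    · intro y hy
      obtain ⟨x, rfl⟩ := (hbij c).2 y
      simp only [Finset.mem_filter, Finset.mem_univ, true_and] at hy
      refine ⟨x, ?_, rfl⟩
      simp only [Finset.mem_filter, Finset.mem_univ, true_and]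
      rw [← hdist] at hy
      exact (hbij c).1 hy
  have hne : ∀ a c, d a ≠ d c → op a c = a := by
    intro a c h
    by_contra hac
    obtain ⟨x, hx, _⟩ := hsol a c hac
    exact h (by rw [← hx, hinv])
  -- the complement of a stabilizer has at least two elements
  have hcard : m + 2 ≤ Fintype.card X := by
    have h1 : ∃ x, op b x ≠ b := by
      by_contra hcon
      push Not at hcon
      have := hstab b
      rw [Finset.filter_true_of_mem (fun x _ => hcon x), Finset.card_univ] at this
      omega
    obtain ⟨x, hx⟩ := h1
    have hx2 := aux_compl op hidem hsol b x hx
    have hxx : x ≠ op b x := by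
      intro h
      have : b = x := (hbij x).1 (by simpa [hidem] using h.symm)
      exact hx (this ▸ hidem b)
    have h3 : ({x, op b x} : Finset X) ⊆ (Finset.univ.filter fun x => op b x = b)ᶜ := by
      intro t ht
      simp only [Finset.mem_insert, Finset.mem_singleton] at ht
      rcases ht with rfl | rfl
      · simpa using hx
      · simpa using hx2
    have h4 := Finset.card_le_card h3
    rw [Finset.card_pair hxx] at h4
    have h5 := Finset.card_add_card_compl (Finset.univ.filter fun x => op b x = b)
    rw [hstab] at h5
    omega
  have hconst : ∀ a, d a = d b := by
    intro a
    by_contra hab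
    set A := Finset.univ.filter fun x => d x = d a with hA
    have hAmem : ∀ x, x ∈ A ↔ d x = d a := by intro x; simp [hA]
    have i1 : insert a Aᶜ ⊆ Finset.univ.filter fun x => op a x = a := by
      intro t ht
      rw [Finset.mem_insert, Finset.mem_compl, hAmem] at ht
      simp only [Finset.mem_filter, Finset.mem_univ, true_and]
      rcases ht with rfl | ht
      · exact hidem _
      · exact hne _ _ (Ne.symm ht)
    have i2 : insert b A ⊆ Finset.univ.filter fun x => op b x = b := by
      intro t ht
      rw [Finset.mem_insert, hAmem] at ht
      simp only [Finset.mem_filter, Finset.mem_univ, true_and]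
      rcases ht with rfl | ht
      · exact hidem _
      · exact hne _ _ (by rw [ht]; exact Ne.symm hab)
    have c1 := Finset.card_le_card i1
    have c2 := Finset.card_le_card i2
    rw [Finset.card_insert_of_notMem (by simp [hA]), hstab] at c1
    rw [Finset.card_insert_of_notMem (by rw [hAmem]; exact Ne.symm hab), hstab] at c2
    have := Finset.card_add_card_compl A
    omega
  have hsum : ∑ c, d c = ∑ a : X, (Finset.univ.filter fun x => op a x = a).card := by
    simp only [hd, Finset.card_filter]
    rw [Finset.sum_comm]
  simp only [hstab, hconst, Finset.sum_const, Finset.card_univ, smul_eq_mul] at hsum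
  exact Nat.eq_of_mul_eq_mul_left (by omega) hsum

/-- For `m ≤ 3` the stabilizer relation is symmetric. -/
theorem aux_symm
    (hidem : ∀ a : X, op a a = a)
    (hbij : ∀ b : X, Function.Bijective fun x => op x b)
    (hdist : ∀ a b c : X, op (op a b) c = op (op a c) (op b c))
    (hstab : ∀ a : X, (Finset.univ.filter fun x => op a x = a).card = m)
    (hsol : ∀ a b : X, op a b ≠ a → ∃! x : X, op a x = b)
    (hm3 : m ≤ 3) (hlt : m < Fintype.card X) (u b : X) (hub : op u b = u) : op b u = b := by
  classical
  by_contra hbu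
  have hP := aux_indeg op m hidem hbij hdist hstab hsol hm3 hlt b
  have hinj : ∀ {x y z : X}, op x z = op y z → x = y := fun {x y z} h => (hbij z).1 h
  have hub' : b ≠ u := by rintro rfl; exact hbu (hidem _)
  obtain ⟨v, hv⟩ : ∃ v, v = op b u := ⟨_, rfl⟩
  have hvb : op v b = v := by rw [hv, hdist, hidem, hub]
  have hv1 : op b v ≠ b := by rw [hv]; exact aux_compl op hidem hsol b u hbu
  have hvneb : v ≠ b := by rw [hv]; exact hbu
  have hvneu : v ≠ u := by
    intro h
    exact hub' (hinj (z := u) (by rw [← hv, hidem, h]))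
  have hset : ({b, u, v} : Finset X) = Finset.univ.filter fun x => op x b = x := by
    apply Finset.eq_of_subset_of_card_le
    · intro t ht
      simp only [Finset.mem_insert, Finset.mem_singleton] at ht
      simp only [Finset.mem_filter, Finset.mem_univ, true_and]
      rcases ht with rfl | rfl | rfl
      · exact hidem _
      · exact hub
      · exact hvb
    · rw [hP, Finset.card_eq_three.2 ⟨b, u, v, hub', hvneb.symm, hvneu.symm, rfl⟩]
      exact hm3
  have hmem : ∀ t, op t b = t → t = b ∨ t = u ∨ t = v := by
    intro t ht
    have : t ∈ ({b, u, v} : Finset X) := by rw [hset]; simpa using ht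
    simpa using this
  have hbv : op b v = u := by
    rcases hmem (op b v) (by rw [hdist, hidem, hvb]) with h | h | h
    · exact absurd h hv1
    · exact h
    · exact absurd (hinj (z := v) (by rw [h, hidem])) hvneb.symm
  have huv : op u v = b := by
    rcases hmem (op u v) (by rw [hdist, hub, hvb]) with h | h | h
    · exact h
    · exact absurd (hinj (z := v) (by rw [h, hbv])) hub'.symm
    · exact absurd (hinj (z := v) (by rw [h, hidem])) hvneu.symm
  have h1 := hdist b u v
  rw [← hv, hidem, hbv, huv, hub] at h1
  exact hvneu h1

/-- For `m ≤ 3` the stabilizers are equivalence classes. -/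
theorem aux_part
    (hidem : ∀ a : X, op a a = a)
    (hbij : ∀ b : X, Function.Bijective fun x => op x b)
    (hdist : ∀ a b c : X, op (op a b) c = op (op a c) (op b c))
    (hstab : ∀ a : X, (Finset.univ.filter fun x => op a x = a).card = m)
    (hsol : ∀ a b : X, op a b ≠ a → ∃! x : X, op a x = b)
    (hm3 : m ≤ 3) (hlt : m < Fintype.card X) (a b : X) (hab : op a b = a) :
    (Finset.univ.filter fun x => op b x = b) = Finset.univ.filter fun x => op a x = a := by
  classical
  have hsym := aux_symm op m hidem hbij hdist hstab hsol hm3 hlt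
  have hinj : ∀ {x y z : X}, op x z = op y z → x = y := fun {x y z} h => (hbij z).1 h
  symm
  apply Finset.eq_of_subset_of_card_le
  · intro c hc
    simp only [Finset.mem_filter, Finset.mem_univ, true_and] at hc ⊢
    by_contra hbc
    have hba := hsym _ _ hab
    have hca := hsym _ _ hc
    obtain ⟨e, he⟩ : ∃ e, e = op b c := ⟨_, rfl⟩
    have hea : op e a = e := by rw [he, hdist, hba, hca]
    have hae := hsym _ _ hea
    have n1 : a ≠ b := by rintro rfl; exact hbc hc
    have n2 : a ≠ c := by rintro rfl; exact hbc hba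
    have n3 : b ≠ c := by rintro rfl; exact hbc (hidem _)
    have n4 : e ≠ a := fun h => n1 (hinj (z := c) (by rw [← he, h, hc]))
    have n5 : e ≠ c := fun h => n3 (hinj (z := c) (by rw [← he, h, hidem]))
    have n6 : e ≠ b := by rw [he]; exact hbc
    have hs : ({e, a, b, c} : Finset X) ⊆ Finset.univ.filter fun x => op a x = a := by
      intro t ht
      simp only [Finset.mem_insert, Finset.mem_singleton] at ht
      simp only [Finset.mem_filter, Finset.mem_univ, true_and]
      rcases ht with rfl | rfl | rfl | rfl
      · exact hae
      · exact hidem _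
      · exact hab
      · exact hc
    have := Finset.card_le_card hs
    rw [hstab, Finset.card_insert_of_notMem (by simp [n4, n5, n6]),
      Finset.card_eq_three.2 ⟨a, b, c, n1, n2, n3, rfl⟩] at this
    omega
  · rw [hstab, hstab]

/-- The equivariant kernel used in the homotopies. -/
def kap (a z : X) : ℤ :=
  (if z = a then (Fintype.card X : ℤ) else 0) - (if op a z = a then 1 else 0)

theorem kap_inv
    (hbij : ∀ b : X, Function.Bijective fun x => op x b)
    (hdist : ∀ a b c : X, op (op a b) c = op (op a c) (op b c)) (a z b : X) :
    kap op (op a b) (op z b) = kap op a z := by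
  have h1 : op z b = op a b ↔ z = a := ⟨fun h => (hbij b).1 h, fun h => by rw [h]⟩
  have h2 : op (op a b) (op z b) = op a b ↔ op a z = a := by
    rw [← hdist]
    exact ⟨fun h => (hbij b).1 h, fun h => by rw [h]⟩
  simp only [kap, h1, h2]

theorem kap_sum {M : Type*} [AddCommGroup M] (a : X) (h : X → M) :
    ∑ z, kap op a z • h z = (Fintype.card X : ℤ) • h a
      - ∑ z ∈ Finset.univ.filter (fun x => op a x = a), h z := by
  simp only [kap, sub_smul, Finset.sum_sub_distrib, ite_smul, zero_smul, one_smul,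
    Finset.sum_ite_eq', Finset.mem_univ, if_true, Finset.sum_filter]

theorem kap_main {M : Type*} [AddCommGroup M]
    (hidem : ∀ a : X, op a a = a)
    (hbij : ∀ b : X, Function.Bijective fun x => op x b)
    (hdist : ∀ a b c : X, op (op a b) c = op (op a c) (op b c))
    (hstab : ∀ a : X, (Finset.univ.filter fun x => op a x = a).card = m)
    (hsol : ∀ a b : X, op a b ≠ a → ∃! x : X, op a x = b)
    (hm3 : m ≤ 3) (hlt : m < Fintype.card X) (f : X → M) (a : X) :
    ∑ z, ∑ y, kap op a z • (f z - f (op z y)) =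
      ((Fintype.card X : ℤ) * (Fintype.card X - m)) • f a
        - ((Fintype.card X : ℤ) - m) • ∑ y, f y := by
  simp only [← Finset.smul_sum]
  rw [kap_sum]
  simp only [Finset.sum_sub_distrib, aux_sum op m hidem hstab hsol, Finset.sum_const,
    Finset.card_univ, Finset.sum_add_distrib]
  have e : ∑ z ∈ Finset.univ.filter (fun x => op a x = a),
      ∑ y ∈ Finset.univ.filter (fun x => op z x = z), f y
      = (m : ℤ) • ∑ y ∈ Finset.univ.filter (fun x => op a x = a), f y := by
    rw [Finset.sum_congr rfl
      (g := fun _ => ∑ y ∈ Finset.univ.filter (fun x => op a x = a), f y),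
      Finset.sum_const, hstab, natCast_zsmul]
    intro z hz
    rw [aux_part op m hidem hbij hdist hstab hsol hm3 hlt a z (Finset.mem_filter.1 hz).2]
  rw [e, ← Finset.smul_sum, ← Finset.smul_sum, hstab]
  simp only [← natCast_zsmul]
  module

end combinatorics

section homotopy

variable {X : Type}

/-- Insert `y` in position `p`, replacing all earlier entries by `z`. -/
def insT (p : ℕ) (z y : X) {N : ℕ} (x : Fin N → X) : Fin (N + 1) → X :=
  fun i => if h : p < (i : ℕ) then x ⟨(i : ℕ) - 1, by omega⟩
    else if (i : ℕ) = p then y else z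

/-- Replace the first `p` entries by `z`. -/
def repT (p : ℕ) (z : X) {N : ℕ} (x : Fin N → X) : Fin N → X :=
  fun i => if (i : ℕ) < p then z else x i

theorem face_lt (op : X → X → X) (hidem : ∀ a : X, op a a = a) (p : ℕ) (z y : X) {N : ℕ}
    (x : Fin N → X) (i : Fin (N + 1)) (hi : (i : ℕ) < p) :
    dZero N i (insT p z y x) = dStar op N i (insT p z y x) := by
  funext j
  simp only [dZero, dStar, insT, Fin.val_castSucc, Fin.val_succ]
  split_ifs <;> first | omega | simp [hidem]

theorem face_eq0 (p : ℕ) (z y : X) {N : ℕ}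
    (x : Fin N → X) (i : Fin (N + 1)) (hi : (i : ℕ) = p) :
    dZero N i (insT p z y x) = repT p z x := by
  funext j
  simp only [dZero, insT, repT, Fin.val_castSucc, Fin.val_succ, hi]
  split_ifs <;> first | omega | simp

theorem face_eqS (op : X → X → X) (p : ℕ) (z y : X) {N : ℕ}
    (x : Fin N → X) (i : Fin (N + 1)) (hi : (i : ℕ) = p) :
    dStar op N i (insT p z y x) = repT p (op z y) x := by
  funext j
  simp only [dStar, insT, repT, Fin.val_castSucc, Fin.val_succ, hi]
  split_ifs <;> first | omega | simp

theorem face_gt0 (p : ℕ) (z y : X) {N : ℕ}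
    (x : Fin (N + 1) → X) (j : Fin (N + 1)) (hj : p ≤ (j : ℕ)) :
    dZero (N + 1) j.succ (insT p z y x) = insT p z y (dZero N j x) := by
  funext t
  simp only [dZero, insT, Fin.val_castSucc, Fin.val_succ]
  split_ifs <;> first
    | omega
    | rfl
    | (congr 1; apply Fin.ext; simp; omega)

theorem face_gtS (op : X → X → X) (p : ℕ) (z y : X) {N : ℕ}
    (x : Fin (N + 1) → X) (j : Fin (N + 1)) (hj : p ≤ (j : ℕ)) :
    dStar op (N + 1) j.succ (insT p z y x)
      = insT p (op z (x j)) (op y (x j)) (dStar op N j x) := by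
  funext t
  simp only [dStar, insT, Fin.val_castSucc, Fin.val_succ]
  split_ifs <;> first
    | omega
    | rfl
    | (congr 1; apply Fin.ext; simp; omega)

theorem ins_face (op : X → X → X) (p : ℕ) (z y : X) {N : ℕ}
    (x : Fin (N + 1) → X) (j : Fin (N + 1)) (hj : (j : ℕ) ≤ p) :
    insT p z y (dZero N j x) = insT p z y (dStar op N j x) := by
  funext t
  simp only [dZero, dStar, insT]
  split_ifs <;> first | omega | rfl

variable [Fintype X] [DecidableEq X]

/-- The homotopy on tuples. -/
noncomputable def hom0 (op : X → X → X) (p k N : ℕ) (x : Fin N → X) : RackChain X (N + 1) :=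
  if h : k < N then
    ∑ z, ∑ y, kap op (x ⟨k, h⟩) z • FreeAbelianGroup.of (insT p z y x)
  else 0

theorem kap_reindex (op : X → X → X)
    (hbij : ∀ b : X, Function.Bijective fun x => op x b)
    (hdist : ∀ a b c : X, op (op a b) c = op (op a c) (op b c))
    {M : Type*} [AddCommGroup M] (F : X → X → M) (a b : X) :
    ∑ z, ∑ y, kap op a z • F (op z b) (op y b) = ∑ z, ∑ y, kap op (op a b) z • F z y := by
  let e : X ≃ X := Equiv.ofBijective _ (hbij b)
  symm
  rw [← Equiv.sum_comp e]
  refine Finset.sum_congr rfl fun z _ => ?_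
  rw [← Equiv.sum_comp e]
  refine Finset.sum_congr rfl fun y _ => ?_
  change kap op (op a b) (op z b) • F (op z b) (op y b) = _
  rw [kap_inv op hbij hdist]

theorem hom0_face (op : X → X → X) (p k N : ℕ) (hkp : k ≤ p) (x : Fin (N + 1) → X)
    (j : Fin (N + 1)) (hj : (j : ℕ) ≤ k) :
    hom0 op p k N (dZero N j x) = hom0 op p k N (dStar op N j x) := by
  unfold hom0
  split_ifs with h
  · have e : dZero N j x ⟨k, h⟩ = dStar op N j x ⟨k, h⟩ := by
      simp only [dZero, dStar]
      split_ifs <;> first | omega | rfl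
    rw [e]
    refine Finset.sum_congr rfl fun z _ => Finset.sum_congr rfl fun y _ => ?_
    rw [ins_face op p z y x j (by omega)]
  · rfl

/-- The tuple-level homotopy identity. -/
theorem hom0_identity (op : X → X → X) (m : ℕ)
    (hidem : ∀ a : X, op a a = a)
    (hbij : ∀ b : X, Function.Bijective fun x => op x b)
    (hdist : ∀ a b c : X, op (op a b) c = op (op a c) (op b c))
    (hstab : ∀ a : X, (Finset.univ.filter fun x => op a x = a).card = m)
    (hsol : ∀ a b : X, op a b ≠ a → ∃! x : X, op a x = b)
    (hm3 : m ≤ 3) (hlt : m < Fintype.card X)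
    (N : ℕ) (q : Fin (N + 1)) (k : Fin (N + 1))
    (hk : (k : ℕ) = q ∨ (k : ℕ) = q + 1) (x : Fin (N + 1) → X) :
    rackBoundary op (N + 1) (hom0 op (q + 1) k (N + 1) x)
      + FreeAbelianGroup.lift (hom0 op (q + 1) k N) (rackBoundary op N (FreeAbelianGroup.of x))
    = ((-1 : ℤ) ^ (q : ℕ)) •
      (((Fintype.card X : ℤ) * (Fintype.card X - m)) • FreeAbelianGroup.of (repT (q + 1) (x k) x)
        - ((Fintype.card X : ℤ) - m) • ∑ y, FreeAbelianGroup.of (repT (q + 1) y x)) := by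
  rw [← kap_main op m hidem hbij hdist hstab hsol hm3 hlt
    (fun z => FreeAbelianGroup.of (repT ((q : ℕ) + 1) z x)) (x k)]
  -- face contributions of the homotopy
  let f : Fin (N + 2) → RackChain X (N + 1) := fun i =>
    ∑ z, ∑ y, kap op (x k) z •
      (FreeAbelianGroup.of (dZero (N + 1) i (insT (q + 1) z y x))
        - FreeAbelianGroup.of (dStar op (N + 1) i (insT (q + 1) z y x)))
  have hL : rackBoundary op (N + 1) (hom0 op (q + 1) k (N + 1) x)
      = ∑ i : Fin (N + 2), ((-1 : ℤ) ^ ((i : ℕ) + 1)) • f i := by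
    have h0 : hom0 op (q + 1) k (N + 1) x
      = ∑ z, ∑ y, kap op (x k) z • FreeAbelianGroup.of (insT (q + 1) z y x) := by
      unfold hom0
      rw [dif_pos k.2]
    rw [h0]
    simp only [map_sum, map_zsmul, rackBoundary, FreeAbelianGroup.lift_apply_of, f,
      Finset.smul_sum]
    rw [Finset.sum_comm (s := (Finset.univ : Finset (Fin (N + 2))))]
    refine Finset.sum_congr rfl fun z _ => ?_
    rw [Finset.sum_comm (s := (Finset.univ : Finset (Fin (N + 2))))]
    refine Finset.sum_congr rfl fun y _ => ?_
    refine Finset.sum_congr rfl fun i _ => ?_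
    rw [smul_comm]
  have hR : FreeAbelianGroup.lift (hom0 op (q + 1) k N)
        (rackBoundary op N (FreeAbelianGroup.of x))
      = ∑ j : Fin (N + 1), ((-1 : ℤ) ^ ((j : ℕ) + 1)) •
        (hom0 op (q + 1) k N (dZero N j x) - hom0 op (q + 1) k N (dStar op N j x)) := by
    simp only [map_sum, map_zsmul, map_sub, rackBoundary, FreeAbelianGroup.lift_apply_of]
  have hf0 : ∀ i : Fin (N + 2), (i : ℕ) < q + 1 → f i = 0 := by
    intro i hi
    simp only [f]
    refine Finset.sum_eq_zero fun z _ => Finset.sum_eq_zero fun y _ => ?_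
    rw [face_lt op hidem _ z y x i hi, sub_self, smul_zero]
  rw [hL, hR, Fin.sum_univ_succ, hf0 0 (by simp), smul_zero, zero_add, ← Finset.sum_add_distrib]
  rw [Finset.sum_eq_single q]
  · rw [hom0_face op _ _ N (by omega) x q (by omega), sub_self, smul_zero, add_zero]
    have : ((-1 : ℤ) ^ (((q.succ : Fin (N + 2)) : ℕ) + 1)) = (-1) ^ (q : ℕ) := by
      rw [Fin.val_succ, pow_succ, pow_succ]; ring
    rw [this]
    congr 1
    refine Finset.sum_congr rfl fun z _ => Finset.sum_congr rfl fun y _ => ?_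
    rw [face_eq0 _ z y x q.succ (by simp), face_eqS op _ z y x q.succ (by simp)]
  · intro j _ hjq
    have hjq' : (j : ℕ) ≠ q := fun h => hjq (Fin.ext h)
    by_cases hlt' : (j : ℕ) < q
    · rw [hf0 _ (by simp; omega), hom0_face op _ _ N (by omega) x j (by omega)]
      simp
    · have hj : (q : ℕ) + 1 ≤ j := by omega
      have hf : f j.succ =
          ∑ z, ∑ y, kap op (x k) z • FreeAbelianGroup.of (insT (q + 1) z y (dZero N j x))
          - ∑ z, ∑ y, kap op (op (x k) (x j)) z •
              FreeAbelianGroup.of (insT (q + 1) z y (dStar op N j x)) := by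
        rw [← kap_reindex op hbij hdist
          (fun z y => FreeAbelianGroup.of (insT ((q : ℕ) + 1) z y (dStar op N j x)))]
        simp only [← Finset.sum_sub_distrib, f, ← smul_sub]
        refine Finset.sum_congr rfl fun z _ => Finset.sum_congr rfl fun y _ => ?_
        rw [face_gt0 _ z y x j hj, face_gtS op _ z y x j hj]
      by_cases hjk : (j : ℕ) ≤ k
      · have hjk' : j = k := Fin.ext (by omega)
        rw [hom0_face op _ _ N (by omega) x j hjk, hf, hjk', hidem]
        have : ∀ z y, insT ((q : ℕ) + 1) z y (dZero N k x)
            = insT ((q : ℕ) + 1) z y (dStar op N k x) := fun z y =>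
          ins_face op _ z y x k (by omega)
        simp [this]
      · have hkN : (k : ℕ) < N := by omega
        have h1 : dZero N j x ⟨k, hkN⟩ = x k := by
          simp only [dZero]
          rw [if_pos (by simpa using hjk)]
          rfl
        have h2 : dStar op N j x ⟨k, hkN⟩ = op (x k) (x j) := by
          simp only [dStar]
          rw [if_pos (by simpa using hjk)]
          rfl
        rw [hf]
        unfold hom0
        rw [dif_pos hkN, dif_pos hkN, h1, h2, Fin.val_succ, pow_succ _ ((j : ℕ) + 1)]
        module
  · simp

/-- Homological consequence on cycles. -/
theorem cycle_rel (op : X → X → X) (m : ℕ)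
    (hidem : ∀ a : X, op a a = a)
    (hbij : ∀ b : X, Function.Bijective fun x => op x b)
    (hdist : ∀ a b c : X, op (op a b) c = op (op a c) (op b c))
    (hstab : ∀ a : X, (Finset.univ.filter fun x => op a x = a).card = m)
    (hsol : ∀ a b : X, op a b ≠ a → ∃! x : X, op a x = b)
    (hm3 : m ≤ 3) (hlt : m < Fintype.card X)
    (N : ℕ) (q : Fin (N + 1)) (k : Fin (N + 1))
    (hk : (k : ℕ) = q ∨ (k : ℕ) = q + 1) (c : RackChain X (N + 1))
    (hc : rackBoundary op N c = 0) :
    ((Fintype.card X : ℤ) * (Fintype.card X - m)) •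
        FreeAbelianGroup.lift (fun x => FreeAbelianGroup.of (repT ((q : ℕ) + 1) (x k) x)) c
      - ((Fintype.card X : ℤ) - m) •
        FreeAbelianGroup.lift (fun x => ∑ y, FreeAbelianGroup.of (repT ((q : ℕ) + 1) y x)) c
      ∈ (rackBoundary op (N + 1)).range := by
  have key : (rackBoundary op (N + 1)).comp
        (FreeAbelianGroup.lift (hom0 op (q + 1) k (N + 1)))
      + (FreeAbelianGroup.lift (hom0 op (q + 1) k N)).comp (rackBoundary op N)
      = ((-1 : ℤ) ^ (q : ℕ)) •
      (((Fintype.card X : ℤ) * (Fintype.card X - m)) •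
        FreeAbelianGroup.lift (fun x => FreeAbelianGroup.of (repT ((q : ℕ) + 1) (x k) x))
      - ((Fintype.card X : ℤ) - m) •
        FreeAbelianGroup.lift
          (fun x => ∑ y, FreeAbelianGroup.of (repT ((q : ℕ) + 1) y x))) := by
    apply FreeAbelianGroup.lift_ext
    intro x
    have := hom0_identity op m hidem hbij hdist hstab hsol hm3 hlt N q k hk x
    simpa only [AddMonoidHom.add_apply, AddMonoidHom.comp_apply, AddMonoidHom.smul_apply,
      AddMonoidHom.sub_apply, FreeAbelianGroup.lift_apply_of] using this
  have h := DFunLike.congr_fun key c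
  simp only [AddMonoidHom.add_apply, AddMonoidHom.comp_apply, AddMonoidHom.smul_apply,
      AddMonoidHom.sub_apply, hc, map_zero, add_zero] at h
  refine ⟨((-1 : ℤ) ^ (q : ℕ)) • FreeAbelianGroup.lift (hom0 op (q + 1) k (N + 1)) c, ?_⟩
  rw [map_zsmul, h, smul_smul, ← mul_pow]
  simp

end homotopy

section final

variable {X : Type}

theorem eps_boundary (op : X → X → X) (N : ℕ) (d : RackChain X (N + 1)) :
    FreeAbelianGroup.lift (fun _ => (1 : ℤ)) (rackBoundary op N d) = 0 := by
  have : (FreeAbelianGroup.lift (fun _ : Fin N → X => (1 : ℤ))).comp (rackBoundary op N) = 0 := by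
    apply FreeAbelianGroup.lift_ext
    intro x
    simp [rackBoundary]
  exact DFunLike.congr_fun this d

theorem lift_const {α M : Type} [AddCommGroup M] (v : M) (c : FreeAbelianGroup α) :
    FreeAbelianGroup.lift (fun _ => v) c
      = (FreeAbelianGroup.lift (fun _ => (1 : ℤ)) c) • v := by
  have : FreeAbelianGroup.lift (fun _ : α => v)
      = ((zmultiplesHom M v)).comp (FreeAbelianGroup.lift (fun _ : α => (1 : ℤ))) := by
    apply FreeAbelianGroup.lift_ext
    intro x
    simp
  rw [this]
  simp

theorem chain_final [Fintype X] [DecidableEq X] (op : X → X → X) (m : ℕ)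
    (hidem : ∀ a : X, op a a = a)
    (hbij : ∀ b : X, Function.Bijective fun x => op x b)
    (hdist : ∀ a b c : X, op (op a b) c = op (op a c) (op b c))
    (hstab : ∀ a : X, (Finset.univ.filter fun x => op a x = a).card = m)
    (hsol : ∀ a b : X, op a b ≠ a → ∃! x : X, op a x = b)
    (hm3 : m ≤ 3) (hlt : m < Fintype.card X)
    (N : ℕ) (c : RackChain X (N + 1)) (hc : rackBoundary op N c = 0)
    (heps : FreeAbelianGroup.lift (fun _ => (1 : ℤ)) c = 0) :
    ((Fintype.card X : ℤ) * (Fintype.card X - m)) • c ∈ (rackBoundary op (N + 1)).range := by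
  have rel := fun q k hk => cycle_rel op m hidem hbij hdist hstab hsol hm3 hlt N q k hk c hc
  set A : ℤ := (Fintype.card X : ℤ) * (Fintype.card X - m) with hA
  -- descending induction
  have step : ∀ t : ℕ, ∀ q : Fin (N + 1), (q : ℕ) + t = N →
      A • FreeAbelianGroup.lift
        (fun x : Fin (N + 1) → X => FreeAbelianGroup.of (repT ((q : ℕ) + 1) (x q) x)) c
      ∈ (rackBoundary op (N + 1)).range := by
    intro t
    induction t with
    | zero =>
      intro q hq
      have h := rel q q (Or.inl rfl)
      have e : (fun x : Fin (N + 1) → X =>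
          ∑ y, FreeAbelianGroup.of (repT ((q : ℕ) + 1) y x))
          = fun _ => ∑ y, FreeAbelianGroup.of (fun _ => y) := by
        funext x
        refine Finset.sum_congr rfl fun y _ => ?_
        congr 1
        funext i
        simp only [repT]
        rw [if_pos (by omega)]
      rw [e, lift_const, heps, zero_smul, smul_zero, sub_zero] at h
      exact h
    | succ t ih =>
      intro q hq
      have h1 := rel q q (Or.inl rfl)
      let q' : Fin (N + 1) := ⟨q + 1, by omega⟩
      have h2 := rel q q' (Or.inr rfl)
      have h3 := ih q' (by simp only [q']; omega)
      have e : (fun x : Fin (N + 1) → X => FreeAbelianGroup.of (repT ((q : ℕ) + 1) (x q') x))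
          = fun x => FreeAbelianGroup.of (repT ((q' : ℕ) + 1) (x q') x) := by
        funext x
        congr 1
        funext i
        simp only [repT]
        by_cases hi : (i : ℕ) < q + 1
        · rw [if_pos hi, if_pos (by simp only [q']; omega)]
        · rw [if_neg hi]
          split_ifs with hi2
          · congr 1
            apply Fin.ext
            simp only [q'] at hi2 ⊢
            omega
          · rfl
      rw [e] at h2
      have h4 := AddSubgroup.add_mem _ (AddSubgroup.sub_mem _ h1 h2) h3
      convert h4 using 1
      abel
  have h := step N 0 (by simp)
  have e : FreeAbelianGroup.lift (fun x : Fin (N + 1) → X =>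
      FreeAbelianGroup.of (repT (((0 : Fin (N + 1)) : ℕ) + 1) (x 0) x)) c = c := by
    have : FreeAbelianGroup.lift (fun x : Fin (N + 1) → X =>
      FreeAbelianGroup.of (repT (((0 : Fin (N + 1)) : ℕ) + 1) (x 0) x))
        = AddMonoidHom.id _ := by
      apply FreeAbelianGroup.lift_ext
      intro x
      rw [FreeAbelianGroup.lift_apply_of, AddMonoidHom.id_apply]
      congr 1
      funext i
      simp only [repT]
      split_ifs with hi
      · congr 1
        apply Fin.ext
        simp only [Fin.val_zero] at hi ⊢
        omega
      · rfl
    rw [this]; rfl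
  rw [e] at h
  exact h

end final

/-- For a finite `m`-almost quasigroup quandle `X` with `m ≤ 3`,
the torsion subgroup of every rack homology group `H_n^R(X)` (`n ≥ 1`) is
annihilated by `N = m · lcm(|X|, |X| - m)`. -/
theorem mAQ_le_three_torsion_annihilated
    {X : Type} [Fintype X] [DecidableEq X] (op : X → X → X) (m : ℕ)
    (hm : 1 ≤ m)
    (hidem : ∀ a : X, op a a = a)
    (hbij : ∀ b : X, Function.Bijective fun x => op x b)
    (hdist : ∀ a b c : X, op (op a b) c = op (op a c) (op b c))
    (hstab : ∀ a : X, (Finset.univ.filter fun x => op a x = a).card = m)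
    (hsol : ∀ a b : X, op a b ≠ a → ∃! x : X, op a x = b)
    (hm3 : m ≤ 3) :
    ∀ n : ℕ, ∀ h : rackHomology op n,
      (∃ k : ℕ, k ≠ 0 ∧ k • h = 0) →
        (m * Nat.lcm (Fintype.card X) (Fintype.card X - m)) • h = 0 := by
  intro n h hk
  have hle : m ≤ Fintype.card X ∨ IsEmpty X := by
    rcases isEmpty_or_nonempty X with hX | ⟨⟨a⟩⟩
    · exact Or.inr hX
    · left
      rw [← hstab a]
      exact Finset.card_le_univ _
  rcases hle with hle | hX
  swap
  · rw [Fintype.card_eq_zero]; simp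
  rcases Nat.eq_or_lt_of_le hle with heq | hlt
  · rw [← heq]; simp
  obtain ⟨k, hk0, hkh⟩ := hk
  obtain ⟨⟨c, hc⟩, rfl⟩ := QuotientAddGroup.mk_surjective h
  have hc' : rackBoundary op n c = 0 := hc
  have hmem : ∀ t : ℕ, (t • (QuotientAddGroup.mk (⟨c, hc⟩ : rackCycles op n) :
      rackHomology op n) = 0) ↔ t • c ∈ (rackBoundary op (n + 1)).range := by
    intro t
    have : (t • (QuotientAddGroup.mk (⟨c, hc⟩ : rackCycles op n) : rackHomology op n))
      = (QuotientAddGroup.mk (t • (⟨c, hc⟩ : rackCycles op n)) :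
          rackCycles (X := X) op n ⧸ rackBoundaries op n) := rfl
    rw [this]
    exact (QuotientAddGroup.eq_zero_iff _).trans AddSubgroup.mem_addSubgroupOf
  have hkc := (hmem k).1 hkh
  refine (hmem _).2 ?_
  have heps : FreeAbelianGroup.lift (fun _ => (1 : ℤ)) c = 0 := by
    obtain ⟨d, hd⟩ := hkc
    have h1 := eps_boundary op (n + 1) d
    rw [hd, map_nsmul, smul_eq_zero] at h1
    exact h1.resolve_left hk0
  have hfin := chain_final op m hidem hbij hdist hstab hsol hm3 hlt n c hc' heps
  have hdvd : Fintype.card X * (Fintype.card X - m)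
      ∣ m * Nat.lcm (Fintype.card X) (Fintype.card X - m) := by
    rw [← Nat.gcd_mul_lcm (Fintype.card X) (Fintype.card X - m)]
    apply Nat.mul_dvd_mul_right
    have h1 := Nat.gcd_dvd_left (Fintype.card X) (Fintype.card X - m)
    have h2 := Nat.gcd_dvd_right (Fintype.card X) (Fintype.card X - m)
    have h3 := Nat.dvd_sub h1 h2
    rwa [Nat.sub_sub_self hle] at h3
  obtain ⟨e, he⟩ := hdvd
  rw [he, mul_comm, mul_smul]
  apply AddSubgroup.nsmul_mem
  rw [← natCast_zsmul]
  push_cast [Nat.cast_sub hle]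
  exact hfin
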